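/- arXiv:1707.00052 — 2 statements merged into one kernel-verified Lean document; each statement's English description precedes it below -/
import Mathlib

section
/- For all integers q ≥ 2, n ≥ 2 and every x ∈ Z_q^n, the size of the single palindromic duplication sphere for duplication length ℓ = 2 satisfies |S_{π,2}(x)| = n − Σ_{i=3}^{n} (i−2) r_i(x) = 2 r(x) − r_1(x), where r(x) is the number of runs of x and r_i(x) the number of runs of x of length exactly i. -/
/-!
Cut every run of `x` down to length at most `2` and let `W x` be the total length that remains.
A run of length `m` contributes `min m 2`, which is both `m - (m - 2)⁺` and `2 - [m = 1]`, so
`W x` is the common value of the two expressions claimed for the sphere size.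

The sphere is the disjoint union of `{x}` and the set `D x` of words reached from `x` by exactly
one duplication, since these are longer than `x`. Duplicating at the first position or further
right gives `D (a b t) = {a b b a t} ∪ a · D (b t)`, and the new word `a b b a t` is already in
`a · D (b t)` exactly when `b t` starts with `a a`. Hence prepending a letter to a nonempty word
increases `|D|` by one unless it extends a run of length at least two. As `W` obeys the same
recursion and `|D| = 0`, `W = 1` for a single letter, `|D| + 1 = W`.
-/

namespace DupPaper

variable {α : Type*}

/-- `y` is obtained from `x` by one tandem duplication of length `ℓ`. -/
def TDup (ℓ : ℕ) (x y : List α) : Prop :=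
  ∃ u v w : List α, v.length = ℓ ∧ x = u ++ v ++ w ∧ y = u ++ v ++ v ++ w

/-- `y` is obtained from `x` by one tandem deletion of length `ℓ`. -/
def TDel (ℓ : ℕ) (x y : List α) : Prop :=
  ∃ u v w : List α, v.length = ℓ ∧ x = u ++ v ++ v ++ w ∧ y = u ++ v ++ w

/-- `y` is obtained from `x` by one palindromic duplication of length `ℓ`. -/
def PDup (ℓ : ℕ) (x y : List α) : Prop :=
  ∃ u v w : List α, v.length = ℓ ∧ x = u ++ v ++ w ∧ y = u ++ v ++ v.reverse ++ w

/-- `y` is obtained from `x` by one palindromic deletion of length `ℓ`. -/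
def PDel (ℓ : ℕ) (x y : List α) : Prop :=
  ∃ u v w : List α, v.length = ℓ ∧ x = u ++ v ++ v.reverse ++ w ∧ y = u ++ v ++ w

/-- `y` is reached from `x` by exactly `k` steps of the relation `rel`. -/
def reachK (rel : List α → List α → Prop) : ℕ → List α → List α → Prop
  | 0, x, y => x = y
  | k + 1, x, y => ∃ z, rel x z ∧ reachK rel k z y

/-- The sphere of all words reachable from `x` by at most `t` operations of type `rel`
(in particular it contains `x` itself). -/
def sphere (rel : List α → List α → Prop) (t : ℕ) (x : List α) : Set (List α) :=
  {y | ∃ k ≤ t, reachK rel k x y}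

/-- A code `C` is `t`-error correcting for the error type `rel` if distinct codewords have
disjoint spheres. -/
def Correcting (rel : List α → List α → Prop) (t : ℕ) (C : Set (List α)) : Prop :=
  ∀ c₁ ∈ C, ∀ c₂ ∈ C, (sphere rel t c₁ ∩ sphere rel t c₂).Nonempty → c₁ = c₂

/-- The list of maximal runs (maximal blocks of identical consecutive symbols) of a word. -/
def runs [DecidableEq α] : List α → List (List α)
  | [] => []
  | a :: rest =>
    match runs rest with
    | [] => [[a]]
    | r :: rs => if r.head? = some a then (a :: r) :: rs else [a] :: r :: rs

/-- `r(x)`: the number of runs of `x`. -/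
def numRuns [DecidableEq α] (x : List α) : ℕ := (runs x).length

/-- `r_i(x)`: the number of runs of `x` of length exactly `i`. -/
def numRunsEq [DecidableEq α] (x : List α) (i : ℕ) : ℕ :=
  ((runs x).filter (fun r => r.length = i)).length

/-- `r_{≥ i}(x)`: the number of runs of `x` of length at least `i`. -/
def numRunsGe [DecidableEq α] (x : List α) (i : ℕ) : ℕ :=
  ((runs x).filter (fun r => i ≤ r.length)).length

/-- `r_{I,2}(x)`: the number of runs of length exactly `2` located in the interior of `x`,
i.e. runs that are neither the first nor the last run of `x`. -/
def numInteriorRuns2 [DecidableEq α] (x : List α) : ℕ :=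
  ((((runs x).drop 1).dropLast).filter (fun r => r.length = 2)).length

/-- The second component `v` of the `ℓ`-step derivative `φ_ℓ(x) = (u, v)`:
`v = (x_{ℓ+1}, …, x_n) − (x_1, …, x_{n−ℓ})` componentwise in `Z_q`. -/
def derivV (q ℓ : ℕ) (x : List (ZMod q)) : List (ZMod q) :=
  List.zipWith (· - ·) (x.drop ℓ) x

/-- Hamming weight: the number of nonzero entries. -/
def wtH {q : ℕ} (v : List (ZMod q)) : ℕ := (v.filter (fun a => a ≠ 0)).length

/-- The lengths `(m_0, m_1, …, m_p)` of the (possibly empty) maximal zero runs of `v`,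
where `v = (0^{m_0}, w_1, 0^{m_1}, w_2, …, w_p, 0^{m_p})` with all `w_i ≠ 0`. -/
def zeroRunLengths {q : ℕ} : List (ZMod q) → List ℕ
  | [] => [0]
  | a :: rest =>
    let t := zeroRunLengths rest
    if a = 0 then
      match t with
      | [] => [1]
      | m :: ms => (m + 1) :: ms
    else 0 :: t

/-- The `ℓ`-zero signature `σ_ℓ(v) = (⌊m_0/ℓ⌋, …, ⌊m_p/ℓ⌋)` of `v = derivV q ℓ x`. -/
def sig (q ℓ : ℕ) (x : List (ZMod q)) : List ℕ :=
  (zeroRunLengths (derivV q ℓ x)).map (· / ℓ)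

/-- The trunk `μ_ℓ(v)`: every maximal zero run of length `m` is shortened to length
`m mod ℓ`. -/
def trunk (q ℓ : ℕ) (v : List (ZMod q)) : List (ZMod q) :=
  ((runs v).map (fun r =>
    if r.head? = some (0 : ZMod q) then List.replicate (r.length % ℓ) (0 : ZMod q) else r)).flatten

/-- The root `ρ_ℓ(x) = (u, μ_ℓ(v))` where `φ_ℓ(x) = (u, v)` is the `ℓ`-step derivative. -/
def root (q ℓ : ℕ) (x : List (ZMod q)) : List (ZMod q) × List (ZMod q) :=
  (x.take ℓ, trunk q ℓ (derivV q ℓ x))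

/-- `ℓ1`-distance of two lists of naturals. -/
def l1diff (a b : List ℕ) : ℕ := (List.zipWith (fun s t => max s t - min s t) a b).sum

/-- The tandem duplication distance `d_{τ,ℓ}`. -/
def tdDist (q ℓ : ℕ) (x₁ x₂ : List (ZMod q)) : ℕ∞ :=
  if root q ℓ x₁ = root q ℓ x₂ then (l1diff (sig q ℓ x₁) (sig q ℓ x₂) : ℕ∞) else ⊤

/-- The palindromic duplication `π_{i,ℓ}(x) = (u v v^R w)` at position `i`,
where `x = (u v w)`, `|u| = i`, `|v| = ℓ`. -/
def pdupAt (i ℓ : ℕ) (x : List α) : List α :=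
  x.take (i + ℓ) ++ ((x.drop i).take ℓ).reverse ++ x.drop (i + ℓ)

/-- The result `(u v w)` of the palindromic deletion `π^δ_{i,ℓ}` applied to
`x = (u v v^R w)` with `|u| = i`, `|v| = ℓ`. -/
def pdelAt (i ℓ : ℕ) (x : List α) : List α :=
  x.take (i + ℓ) ++ x.drop (i + 2 * ℓ)

/-- The palindromic deletion `π^δ_{i,ℓ}` is defined at position `i` of `x`, i.e. `x` has the
form `(u v v^R w)` with `|u| = i` and `|v| = ℓ`. -/
def PDelDefinedAt (q ℓ i : ℕ) (x : List (ZMod q)) : Prop :=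
  ∃ u v w : List (ZMod q), u.length = i ∧ v.length = ℓ ∧ x = u ++ v ++ v.reverse ++ w

/-- `A(n', ℓ', ω)`: the number of words in `Z_q^{n'}` whose maximal zero runs all have length
at most `ℓ'` and whose Hamming weight is `ω`. -/
noncomputable def Acount (q n' ℓ' ω : ℕ) : ℕ :=
  {x : Fin n' → ZMod q | wtH (List.ofFn x) = ω ∧
    ∀ r ∈ runs (List.ofFn x), r.head? = some (0 : ZMod q) → r.length ≤ ℓ'}.ncard

/-- Integer binomial coefficient with the conventions `C(a,b) = 0` for `a ≥ 0 > b` or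
`0 ≤ a < b`, `C(-1,-1) = 1`, and `C(a,-1) = 0` for `a ≥ 0`. -/
def ichoose (a b : ℤ) : ℕ :=
  if a = -1 ∧ b = -1 then 1
  else if 0 ≤ a ∧ 0 ≤ b then Nat.choose a.toNat b.toNat
  else 0

/-- `r^{(0)}(A^π_ℓ(x))`: the number of maximal blocks of consecutive all-zero columns of the
matrix `A^π_ℓ(x) ∈ Z_q^{ℓ × (n−2ℓ+1)}` whose entry in row `s` and column `c`
(`1 ≤ s ≤ ℓ`, `1 ≤ c ≤ n−2ℓ+1`) is `x_{2ℓ+c−s} − x_{c+s−1}`. -/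
def zeroColBlocks (q ℓ n : ℕ) (x : List (ZMod q)) : ℕ :=
  ((runs ((List.range (n - 2 * ℓ + 1)).map (fun c =>
      (List.range ℓ).all (fun s =>
        x.getD (2 * ℓ + c - s - 1) (0 : ZMod q) = x.getD (c + s) (0 : ZMod q))))).filter
    (fun r => r.head? = some true)).length

theorem sphere_one (rel : List α → List α → Prop) (x : List α) :
    sphere rel 1 x = insert x {y | rel x y} := by
  ext y
  constructor
  · rintro ⟨k, hk, h⟩
    interval_cases k
    · exact Or.inl h.symm
    · obtain ⟨z, hxz, rfl⟩ := h
      exact Or.inr hxz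
  · rintro (rfl | h)
    · exact ⟨0, zero_le_one, rfl⟩
    · exact ⟨1, le_rfl, y, h, rfl⟩

/-- The set of words obtained from `x` by exactly one palindromic duplication of length `ℓ`;
for `ℓ ≠ 0` this is the sphere of radius one without its centre. -/
def pDups (ℓ : ℕ) (x : List α) : Set (List α) := {y | PDup ℓ x y}

theorem mem_pDups_iff_exists_pdupAt {ℓ : ℕ} {x y : List α} :
    y ∈ pDups ℓ x ↔ ∃ i, i + ℓ ≤ x.length ∧ pdupAt i ℓ x = y := by
  constructor
  · rintro ⟨u, v, w, rfl, rfl, rfl⟩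
    exact ⟨u.length, by simp, by simp [pdupAt, List.take_append, List.take_of_length_le]⟩
  · rintro ⟨i, hi, rfl⟩
    refine ⟨x.take i, (x.drop i).take ℓ, x.drop (i + ℓ), ?_, ?_, ?_⟩
    · rw [List.length_take, List.length_drop]
      omega
    · rw [← List.take_add, List.take_append_drop]
    · rw [← List.take_add, pdupAt]

theorem length_pdupAt {i ℓ : ℕ} {x : List α} (h : i + ℓ ≤ x.length) :
    (pdupAt i ℓ x).length = x.length + ℓ := by
  simp only [pdupAt, List.length_append, List.length_reverse, List.length_take, List.length_drop]
  omega

theorem pdupAt_succ_cons (i ℓ : ℕ) (a : α) (x : List α) :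
    pdupAt (i + 1) ℓ (a :: x) = a :: pdupAt i ℓ x := by
  simp [pdupAt, Nat.add_right_comm i 1 ℓ]

theorem notMem_pDups_self {ℓ : ℕ} (hℓ : ℓ ≠ 0) (x : List α) : x ∉ pDups ℓ x := by
  rw [mem_pDups_iff_exists_pdupAt]
  rintro ⟨i, hi, h⟩
  have hlen := length_pdupAt hi
  rw [h] at hlen
  omega

theorem finite_pDups (ℓ : ℕ) (x : List α) : (pDups ℓ x).Finite := by
  refine ((Set.finite_Iic x.length).image fun i => pdupAt i ℓ x).subset fun y hy => ?_
  obtain ⟨i, hi, rfl⟩ := mem_pDups_iff_exists_pdupAt.1 hy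
  exact ⟨i, (Nat.le_add_right i ℓ).trans hi, rfl⟩

theorem pDups_eq_empty_of_length_lt {ℓ : ℕ} {x : List α} (h : x.length < ℓ) :
    pDups ℓ x = ∅ := by
  refine Set.eq_empty_of_forall_notMem fun y hy => ?_
  obtain ⟨i, hi, -⟩ := mem_pDups_iff_exists_pdupAt.1 hy
  omega

theorem pDups_cons {ℓ : ℕ} {a : α} {x : List α} (h : ℓ ≤ (a :: x).length) :
    pDups ℓ (a :: x) = insert (pdupAt 0 ℓ (a :: x)) (List.cons a '' pDups ℓ x) := by
  ext y
  simp only [Set.mem_insert_iff, Set.mem_image, mem_pDups_iff_exists_pdupAt]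
  constructor
  · rintro ⟨_ | i, hi, rfl⟩
    · exact Or.inl rfl
    · rw [List.length_cons] at hi
      exact Or.inr ⟨_, ⟨i, by omega, rfl⟩, (pdupAt_succ_cons i ℓ a x).symm⟩
  · rintro (rfl | ⟨_, ⟨i, hi, rfl⟩, rfl⟩)
    · exact ⟨0, by omega, rfl⟩
    · exact ⟨i + 1, by rw [List.length_cons]; omega, pdupAt_succ_cons i ℓ a x⟩

theorem pDups_two_cons_cons (a b : α) (t : List α) :
    pDups 2 (a :: b :: t) = insert (a :: b :: b :: a :: t) (List.cons a '' pDups 2 (b :: t)) :=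
  pDups_cons (Nat.le_add_left 2 t.length)

theorem eq_and_head?_eq_of_cons_cons_mem_pDups_two {p q : α} {t : List α}
    (h : p :: q :: t ∈ pDups 2 t) : p = q ∧ t.head? = some p := by
  induction t generalizing p q with
  | nil => simp [pDups_eq_empty_of_length_lt] at h
  | cons c s ih =>
    rcases s with _ | ⟨d, s⟩
    · simp [pDups_eq_empty_of_length_lt] at h
    · rw [pDups_two_cons_cons] at h
      rcases h with h | ⟨z, hz, h⟩
      · simp only [List.cons.injEq] at h
        obtain ⟨rfl, rfl, rfl, -⟩ := h
        exact ⟨rfl, rfl⟩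
      · simp only [List.cons.injEq] at h
        obtain ⟨rfl, rfl⟩ := h
        exact ⟨(ih hz).1.symm, rfl⟩

theorem cons_cons_cons_mem_pDups_two_iff {a b : α} {t : List α} :
    b :: b :: a :: t ∈ pDups 2 (b :: t) ↔ [a, a] <+: b :: t := by
  rcases t with _ | ⟨c, t⟩
  · simp [pDups_eq_empty_of_length_lt]
  · rw [pDups_two_cons_cons]
    simp only [List.cons_prefix_cons, List.nil_prefix, and_true]
    constructor
    · rintro (h | ⟨z, hz, h⟩)
      · simp only [List.cons.injEq] at h
        obtain ⟨-, rfl, rfl, -⟩ := h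
        exact ⟨rfl, rfl⟩
      · simp only [List.cons.injEq, true_and] at h
        subst h
        obtain ⟨rfl, hc⟩ := eq_and_head?_eq_of_cons_cons_mem_pDups_two hz
        exact ⟨rfl, (Option.some.inj hc).symm⟩
    · rintro ⟨rfl, rfl⟩
      exact Set.mem_insert _ _

theorem ncard_pDups_two_cons [DecidableEq α] (a : α) {x : List α} (hx : x ≠ []) :
    (pDups 2 (a :: x)).ncard = (pDups 2 x).ncard + if [a, a] <+: x then 0 else 1 := by
  obtain ⟨b, t, rfl⟩ := List.exists_cons_of_ne_nil hx
  have hinj : Function.Injective (List.cons a) := List.cons_injective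
  have hnew : a :: b :: b :: a :: t ∈ List.cons a '' pDups 2 (b :: t) ↔ [a, a] <+: b :: t :=
    hinj.mem_set_image.trans cons_cons_cons_mem_pDups_two_iff
  rw [pDups_two_cons_cons, ← Set.ncard_image_of_injective (pDups 2 (b :: t)) hinj]
  split_ifs with h
  · rw [Set.insert_eq_of_mem (hnew.2 h), add_zero]
  · exact Set.ncard_insert_of_notMem (mt hnew.1 h) ((finite_pDups 2 _).image _)

section Runs

variable [DecidableEq α]

theorem runs_cons (a : α) (x : List α) :
    runs (a :: x) = (a :: x.takeWhile (· = a)) :: runs (x.dropWhile (· = a)) := by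
  induction x generalizing a with
  | nil => rfl
  | cons b t ih =>
    rw [runs, ih b]
    by_cases hab : b = a
    · subst hab
      simp
    · simp [hab, ih b]

@[elab_as_elim]
theorem dropWhile_induction {motive : List α → Prop} (nil : motive [])
    (cons : ∀ a x, motive (x.dropWhile (· = a)) → motive (a :: x)) (x : List α) : motive x := by
  induction h : x.length using Nat.strong_induction_on generalizing x with
  | _ n ih =>
    subst h
    rcases x with _ | ⟨a, x⟩
    · exact nil
    · refine cons a x (ih _ ?_ _ rfl)
      exact Nat.lt_succ_of_le (List.dropWhile_sublist _).length_le

theorem flatten_runs (x : List α) : (runs x).flatten = x := by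
  induction x using dropWhile_induction with
  | nil => rfl
  | cons a x ih =>
    rw [runs_cons, List.flatten_cons, ih, List.cons_append, List.takeWhile_append_dropWhile]

theorem sum_map_length_runs (x : List α) : ((runs x).map List.length).sum = x.length := by
  rw [← List.length_flatten, flatten_runs]

theorem length_le_of_mem_runs {x r : List α} (hr : r ∈ runs x) : r.length ≤ x.length := by
  have h := (List.sublist_flatten_of_mem hr).length_le
  rwa [flatten_runs] at h

theorem ne_nil_of_mem_runs {x r : List α} (hr : r ∈ runs x) : r ≠ [] := by
  induction x using dropWhile_induction with
  | nil => cases hr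
  | cons a x ih =>
    rw [runs_cons, List.mem_cons] at hr
    rcases hr with rfl | hr
    · exact List.cons_ne_nil _ _
    · exact ih hr

theorem sum_mul_numRunsEq {R : Type*} [Semiring R] (s : Finset ℕ) (f : ℕ → R) (x : List α) :
    ∑ i ∈ s, f i * (numRunsEq x i : R)
      = ((runs x).map fun r => if r.length ∈ s then f r.length else 0).sum := by
  unfold numRunsEq
  induction runs x with
  | nil => simp
  | cons r L ih =>
    have hcons (i : ℕ) : (((r :: L).filter fun r => r.length = i).length : R)
        = (if r.length = i then 1 else 0) + ((L.filter fun r => r.length = i).length : R) := by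
      by_cases h : r.length = i <;> simp [h, add_comm]
    simp only [hcons, mul_add, Finset.sum_add_distrib, ih, mul_ite, mul_one, mul_zero,
      Finset.sum_ite_eq, List.map_cons, List.sum_cons]

end Runs

section CappedLength

variable [DecidableEq α]

/-- The length that is left of `x` after every run is cut down to length at most `k`.
For `k = 2` and nonempty `x` this is the size of the sphere. -/
def cappedLength (k : ℕ) (x : List α) : ℕ := ((runs x).map fun r => min r.length k).sum

theorem cappedLength_add_sum_Icc (k : ℕ) (x : List α) :
    (cappedLength k x : ℤ) + ∑ i ∈ Finset.Icc (k + 1) x.length, ((i : ℤ) - k) * numRunsEq x i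
      = x.length := by
  have hlength : (x.length : ℤ) = ((runs x).map fun r => (r.length : ℤ)).sum := by
    rw [← sum_map_length_runs x, Nat.cast_list_sum, List.map_map]
    rfl
  rw [hlength, sum_mul_numRunsEq, cappedLength, Nat.cast_list_sum, List.map_map,
    ← List.sum_map_add]
  refine congrArg List.sum (List.map_congr_left fun r hr => ?_)
  have hlen := length_le_of_mem_runs hr
  simp only [Function.comp_apply, Finset.mem_Icc]
  split_ifs <;> omega

theorem cappedLength_add_sum_Ico (k : ℕ) (x : List α) :
    (cappedLength k x : ℤ) + ∑ i ∈ Finset.Ico 1 k, ((k : ℤ) - i) * numRunsEq x i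
      = k * numRuns x := by
  have hconst : (k * numRuns x : ℤ) = ((runs x).map fun _ => (k : ℤ)).sum := by
    simp [numRuns, mul_comm]
  rw [hconst, sum_mul_numRunsEq, cappedLength, Nat.cast_list_sum, List.map_map,
    ← List.sum_map_add]
  refine congrArg List.sum (List.map_congr_left fun r hr => ?_)
  have hpos := List.length_pos_iff.2 (ne_nil_of_mem_runs hr)
  simp only [Function.comp_apply, Finset.mem_Ico]
  split_ifs <;> omega

theorem replicate_prefix_iff_le_length_takeWhile {k : ℕ} {a : α} {x : List α} :
    List.replicate k a <+: x ↔ k ≤ (x.takeWhile (· = a)).length := by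
  induction x generalizing k with
  | nil => simp
  | cons b x ih =>
    rcases k with _ | k
    · simp
    · by_cases hab : b = a
      · simp [List.replicate_succ, List.cons_prefix_cons, hab, ih]
      · simp [List.replicate_succ, List.cons_prefix_cons, hab, Ne.symm hab]

theorem cappedLength_cons_eq_min_add (k : ℕ) (a : α) (x : List α) :
    cappedLength k (a :: x)
      = min ((x.takeWhile (· = a)).length + 1) k + cappedLength k (x.dropWhile (· = a)) := by
  simp [cappedLength, runs_cons]

theorem cappedLength_eq_min_takeWhile_add (k : ℕ) (a : α) (x : List α) :
    cappedLength k x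
      = min (x.takeWhile (· = a)).length k + cappedLength k (x.dropWhile (· = a)) := by
  rcases x with _ | ⟨b, x⟩
  · simp
  · by_cases hab : b = a
    · subst hab
      simp [cappedLength_cons_eq_min_add]
    · simp [hab]

theorem cappedLength_cons (k : ℕ) (a : α) (x : List α) :
    cappedLength k (a :: x)
      = cappedLength k x + if List.replicate k a <+: x then 0 else 1 := by
  rw [cappedLength_cons_eq_min_add, cappedLength_eq_min_takeWhile_add k a x]
  simp only [replicate_prefix_iff_le_length_takeWhile]
  split_ifs <;> omega

end CappedLength

theorem ncard_pDups_two_add_one [DecidableEq α] {x : List α} (hx : x ≠ []) :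
    (pDups 2 x).ncard + 1 = cappedLength 2 x := by
  induction x with
  | nil => exact absurd rfl hx
  | cons a x ih =>
    rcases eq_or_ne x [] with rfl | hx'
    · simp [pDups_eq_empty_of_length_lt, cappedLength, runs]
    · rw [ncard_pDups_two_cons a hx', cappedLength_cons, ← ih hx', add_right_comm]
      rfl

theorem ncard_sphere_pDup_two [DecidableEq α] {x : List α} (hx : x ≠ []) :
    (sphere (PDup 2) 1 x).ncard = cappedLength 2 x := by
  have hsphere : sphere (PDup 2) 1 x = insert x (pDups 2 x) := sphere_one (PDup 2) x
  rw [hsphere, Set.ncard_insert_of_notMem (notMem_pDups_self two_ne_zero x) (finite_pDups 2 x),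
    ncard_pDups_two_add_one hx]

theorem stmt8_general [DecidableEq α] (x : List α) (hx : x ≠ []) :
    ((sphere (PDup 2) 1 x).ncard : ℤ)
        = (x.length : ℤ) - ∑ i ∈ Finset.Icc 3 x.length, ((i : ℤ) - 2) * (numRunsEq x i : ℤ) ∧
    ((sphere (PDup 2) 1 x).ncard : ℤ) = 2 * (numRuns x : ℤ) - (numRunsEq x 1 : ℤ) := by
  rw [ncard_sphere_pDup_two hx]
  constructor
  · exact eq_sub_of_add_eq (cappedLength_add_sum_Icc 2 x)
  · refine eq_sub_of_add_eq ?_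
    simpa using cappedLength_add_sum_Ico 2 x

/-- The size of the single palindromic duplication sphere for `ℓ = 2`:
`|S_{π,2}(x)| = n − Σ_{i=3}^n (i−2) r_i(x) = 2 r(x) − r_1(x)`. -/
theorem stmt8 (q n : ℕ) (hq : 2 ≤ q) (hn : 2 ≤ n) (x : List (ZMod q)) (hx : x.length = n) :
    ((sphere (PDup 2) 1 x).ncard : ℤ)
        = (n : ℤ) - ∑ i ∈ Finset.Icc 3 n, ((i : ℤ) - 2) * (numRunsEq x i : ℤ) ∧
    ((sphere (PDup 2) 1 x).ncard : ℤ) = 2 * (numRuns x : ℤ) - (numRunsEq x 1 : ℤ) := by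
  subst hx
  exact stmt8_general x (List.ne_nil_of_length_pos (by omega))

end DupPaper
end

section
/- For all integers q ≥ 2, ℓ ≥ 1 and n ≥ 2ℓ, every code C ⊆ Z_q^n that is single tandem-duplication correcting for duplications of length ℓ satisfies |C| ≤ Σ_{x ∈ Z_q^n} 1/|S_{τ^δ,ℓ}(x)| + Σ_{x' ∈ Z_q^{n−ℓ}} 1/|S_{τ^δ,ℓ}(x')| (the generalized sphere packing bound). -/
/-!
Weigh a word `y` by `1 / |S(y)|`, where `S` is the sphere of at most one tandem deletion. Two
duplications of the same word have a common duplication, so the deletion spheres of the codewords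
are pairwise disjoint, and it is enough that each has weight at least `1`. This holds because
`|S(y)| ≤ |S(c)|` for `y ∈ S(c)`: tandem deletions of `x` within one maximal `ℓ`-periodic stretch
give the same word and those in different stretches different words, so `|S(x)| - 1` counts the
stretches that contain a square of period `ℓ`, and a deletion creates no such stretch.
-/

namespace DupPaper

variable {α : Type*}

theorem card_le_sum_one_div_ncard {ι K : Type*} [Field K] [LinearOrder K] [IsStrictOrderedRing K]
    {N : ι → Set ι} (hfin : ∀ y, (N y).Finite) (hself : ∀ y, y ∈ N y) {C W : Finset ι}
    (hmono : ∀ c ∈ C, ∀ y ∈ N c, (N y).ncard ≤ (N c).ncard)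
    (hdisj : (C : Set ι).PairwiseDisjoint N) (hsub : ∀ c ∈ C, N c ⊆ W) :
    (C.card : K) ≤ ∑ y ∈ W, 1 / ((N y).ncard : K) := by
  classical
  lift N to ι → Finset ι using hfin
  simp only [Set.ncard_coe_finset, Finset.mem_coe, Finset.coe_subset] at *
  have card_pos (y : ι) : (0 : K) < (N y).card := mod_cast Finset.card_pos.2 ⟨y, hself y⟩
  have one_le_weight : ∀ c ∈ C, 1 ≤ ∑ y ∈ N c, 1 / ((N y).card : K) := fun c hc => calc
    (1 : K) = ∑ _y ∈ N c, 1 / ((N c).card : K) := by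
      rw [Finset.sum_const, nsmul_eq_mul, mul_one_div_cancel (card_pos c).ne']
    _ ≤ ∑ y ∈ N c, 1 / ((N y).card : K) := Finset.sum_le_sum fun y hy =>
      one_div_le_one_div_of_le (card_pos y) (mod_cast hmono c hc y hy)
  calc (C.card : K) = ∑ _c ∈ C, 1 := by simp
    _ ≤ ∑ c ∈ C, ∑ y ∈ N c, 1 / ((N y).card : K) := Finset.sum_le_sum one_le_weight
    _ = ∑ y ∈ C.biUnion N, 1 / ((N y).card : K) :=
      (Finset.sum_biUnion fun a ha b hb hab =>
        Finset.disjoint_coe.1 (hdisj ha hb hab)).symm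
    _ ≤ ∑ y ∈ W, 1 / ((N y).card : K) :=
      Finset.sum_le_sum_of_subset_of_nonneg (Finset.biUnion_subset.2 hsub)
        fun y _ _ => by positivity

section Sphere

variable {rel : List α → List α → Prop} {x y : List α}

theorem mem_sphere_one : y ∈ sphere rel 1 x ↔ y = x ∨ rel x y := by
  constructor
  · rintro ⟨k, hk, h⟩
    interval_cases k
    · exact Or.inl (Eq.symm h)
    · obtain ⟨z, hxz, rfl⟩ := h
      exact Or.inr hxz
  · rintro (rfl | h)
    · exact ⟨0, zero_le_one, rfl⟩
    · exact ⟨1, le_rfl, y, h, rfl⟩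

theorem Correcting.pairwiseDisjoint_sphere_flip {C : Set (List α)} (hC : Correcting rel 1 C)
    (diamond : ∀ ⦃z x y⦄, rel z x → rel z y → ∃ t, rel x t ∧ rel y t) :
    C.PairwiseDisjoint (sphere (flip rel) 1) := by
  refine fun a ha b hb hab => Set.disjoint_left.2 fun z hza hzb => hab (hC a ha b hb ?_)
  simp only [Set.Nonempty, Set.mem_inter_iff, mem_sphere_one] at hza hzb ⊢
  rcases hza with rfl | hza <;> rcases hzb with rfl | hzb
  · exact ⟨z, Or.inl rfl, Or.inl rfl⟩
  · exact ⟨b, Or.inr hzb, Or.inl rfl⟩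
  · exact ⟨a, Or.inl rfl, Or.inr hza⟩
  · obtain ⟨t, hat, hbt⟩ := diamond hza hzb
    exact ⟨t, Or.inr hat, Or.inr hbt⟩

end Sphere

section Duplication

variable {ℓ i j : ℕ} {x y z : List α}

/-- The tandem duplication `τ_{i,ℓ}(x) = (u v v w)` of `x = (u v w)`, where `|u| = i` and
`|v| = ℓ`; meaningful for `i + ℓ ≤ |x|`. -/
def tdupAt (i ℓ : ℕ) (x : List α) : List α := x.take (i + ℓ) ++ x.drop i

theorem tdup_iff_exists_tdupAt :
    TDup ℓ x y ↔ ∃ i, i + ℓ ≤ x.length ∧ y = tdupAt i ℓ x := by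
  constructor
  · rintro ⟨u, v, w, rfl, rfl, rfl⟩
    exact ⟨u.length, by simp, by simp [tdupAt, List.take_append]⟩
  · rintro ⟨i, hi, rfl⟩
    refine ⟨x.take i, (x.drop i).take ℓ, x.drop (i + ℓ), by grind, ?_, ?_⟩
    · rw [← List.take_add, List.take_append_drop]
    · rw [← List.take_add, List.append_assoc, ← List.drop_drop, List.take_append_drop, tdupAt]

theorem length_tdupAt (hi : i + ℓ ≤ x.length) : (tdupAt i ℓ x).length = x.length + ℓ := by
  grind [tdupAt]

theorem getElem?_tdupAt (hi : i + ℓ ≤ x.length) (k : ℕ) :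
    (tdupAt i ℓ x)[k]? = if k < i + ℓ then x[k]? else x[k - ℓ]? := by
  grind [tdupAt]

theorem tdupAt_comm (hij : i ≤ j) (hj : j + ℓ ≤ x.length) :
    tdupAt (j + ℓ) ℓ (tdupAt i ℓ x) = tdupAt i ℓ (tdupAt j ℓ x) := by
  have hli := length_tdupAt ((Nat.add_le_add_right hij ℓ).trans hj)
  have hlj := length_tdupAt hj
  apply List.ext_getElem?
  grind [getElem?_tdupAt]

theorem TDup.diamond (hx : TDup ℓ z x) (hy : TDup ℓ z y) : ∃ t, TDup ℓ x t ∧ TDup ℓ y t := by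
  obtain ⟨i, hi, rfl⟩ := tdup_iff_exists_tdupAt.1 hx
  obtain ⟨j, hj, rfl⟩ := tdup_iff_exists_tdupAt.1 hy
  have hli := length_tdupAt hi
  have hlj := length_tdupAt hj
  simp only [tdup_iff_exists_tdupAt]
  rcases le_total i j with hij | hji
  · exact ⟨_, ⟨j + ℓ, by omega, rfl⟩, ⟨i, by omega, tdupAt_comm hij hj⟩⟩
  · exact ⟨_, ⟨j, by omega, tdupAt_comm hji hi⟩, ⟨i + ℓ, by omega, rfl⟩⟩

theorem flip_tdup : flip (TDup ℓ) = TDel (α := α) ℓ := by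
  ext x y
  simp only [flip, TDup, TDel, and_comm]

end Duplication

section Square

variable {ℓ i j k : ℕ} {x y : List α}

/-- `x` has a square `v v` with `|v| = ℓ` at position `i`, that is, the tandem deletion
`τ^δ_{i,ℓ}` is defined at `x`. -/
def SquareAt (i ℓ : ℕ) (x : List α) : Prop :=
  i + 2 * ℓ ≤ x.length ∧ ∀ k, i ≤ k → k < i + ℓ → x[k + ℓ]? = x[k]?

/-- The tandem deletion `τ^δ_{i,ℓ}(x) = (u v w)` of `x = (u v v w)`, where `|u| = i` and
`|v| = ℓ`, obtained by removing the first copy of `v`; meaningful under `SquareAt i ℓ x`. -/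
def tdelAt (i ℓ : ℕ) (x : List α) : List α := x.take i ++ x.drop (i + ℓ)

theorem squareAt_iff_exists_append :
    SquareAt i ℓ x ↔ ∃ u v w, u.length = i ∧ v.length = ℓ ∧ x = u ++ v ++ v ++ w := by
  constructor
  · rintro ⟨hlen, hper⟩
    have blocks_eq : (x.drop i).take ℓ = (x.drop (i + ℓ)).take ℓ := by
      apply List.ext_getElem?
      grind
    refine ⟨x.take i, (x.drop i).take ℓ, x.drop (i + ℓ + ℓ), by grind, by grind, ?_⟩
    nth_rw 2 [blocks_eq]
    rw [← List.take_add, ← List.take_add, List.take_append_drop]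
  · rintro ⟨u, v, w, rfl, rfl, rfl⟩
    exact ⟨by grind, by grind⟩

theorem tdel_iff_exists_tdelAt : TDel ℓ x y ↔ ∃ i, SquareAt i ℓ x ∧ y = tdelAt i ℓ x := by
  simp only [squareAt_iff_exists_append]
  constructor
  · rintro ⟨u, v, w, hv, rfl, rfl⟩
    exact ⟨u.length, ⟨u, v, w, rfl, hv, rfl⟩, by simp [tdelAt, ← hv]⟩
  · rintro ⟨_, ⟨u, v, w, rfl, hv, rfl⟩, rfl⟩
    exact ⟨u, v, w, hv, rfl, by simp [tdelAt, ← hv]⟩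

theorem TDel.length_add (h : TDel ℓ x y) : y.length + ℓ = x.length := by
  obtain ⟨u, v, w, rfl, rfl, rfl⟩ := h
  simp only [List.length_append]
  omega

theorem SquareAt.length_tdelAt_add (h : SquareAt i ℓ x) :
    (tdelAt i ℓ x).length + ℓ = x.length :=
  (tdel_iff_exists_tdelAt.2 ⟨i, h, rfl⟩).length_add

theorem SquareAt.getElem?_tdelAt_of_le (h : SquareAt i ℓ x) (hk : i ≤ k) :
    (tdelAt i ℓ x)[k]? = x[k + ℓ]? := by
  grind [tdelAt, SquareAt]

theorem SquareAt.getElem?_tdelAt_of_lt (h : SquareAt i ℓ x) (hk : k < i + ℓ) :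
    (tdelAt i ℓ x)[k]? = x[k]? := by
  grind [tdelAt, SquareAt]

/-- The left ends of the maximal blocks of consecutive positions at which `x` has a square of
period `ℓ`. They represent the different tandem deletions of `x`. -/
def squareStarts (ℓ : ℕ) (x : List α) : Set ℕ :=
  {i | SquareAt i ℓ x ∧ ∀ k, k + 1 = i → ¬SquareAt k ℓ x}

theorem finite_squareStarts (ℓ : ℕ) (x : List α) : (squareStarts ℓ x).Finite :=
  (Set.finite_Iic x.length).subset fun i hi => by
    have := hi.1.1
    simp only [Set.mem_Iic]
    omega

theorem getElem?_ne_of_succ_mem_squareStarts (hi : i + 1 ∈ squareStarts ℓ x) :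
    x[i + ℓ]? ≠ x[i]? := by
  obtain ⟨⟨hlen, hper⟩, hleft⟩ := hi
  refine fun heq => hleft i rfl ⟨by omega, fun k hik hk => ?_⟩
  rcases hik.eq_or_lt with rfl | hik
  · exact heq
  · exact hper k hik (by omega)

theorem SquareAt.tdelAt_succ (h : SquareAt i ℓ x) : tdelAt (i + 1) ℓ x = tdelAt i ℓ x := by
  apply List.ext_getElem?
  grind [tdelAt, SquareAt]

theorem SquareAt.exists_mem_squareStarts (h : SquareAt i ℓ x) :
    ∃ j ∈ squareStarts ℓ x, tdelAt j ℓ x = tdelAt i ℓ x := by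
  induction i with
  | zero => exact ⟨0, ⟨h, by simp⟩, rfl⟩
  | succ i ih =>
    by_cases hi : SquareAt i ℓ x
    · rw [hi.tdelAt_succ]
      exact ih hi
    · exact ⟨i + 1, ⟨h, by simpa using hi⟩, rfl⟩

theorem tdelAt_ne_tdelAt_of_lt (hi : SquareAt i ℓ x) (hj : j ∈ squareStarts ℓ x) (hij : i < j) :
    tdelAt i ℓ x ≠ tdelAt j ℓ x := by
  obtain ⟨j, rfl⟩ := Nat.exists_eq_add_one_of_ne_zero (Nat.ne_zero_of_lt hij)
  intro heq
  apply getElem?_ne_of_succ_mem_squareStarts hj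
  rw [← hi.getElem?_tdelAt_of_le (by omega), heq, hj.1.getElem?_tdelAt_of_lt (by omega)]

theorem injOn_tdelAt_squareStarts :
    Set.InjOn (fun i => tdelAt i ℓ x) (squareStarts ℓ x) := by
  intro i hi j hj heq
  rcases lt_trichotomy i j with hij | hij | hji
  · exact absurd heq (tdelAt_ne_tdelAt_of_lt hi.1 hj hij)
  · exact hij
  · exact absurd heq.symm (tdelAt_ne_tdelAt_of_lt hj.1 hi hji)

end Square

section DeletionSphere

variable {ℓ i j : ℕ} {x y : List α}

theorem sphere_tdel_one_eq (ℓ : ℕ) (x : List α) :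
    sphere (TDel ℓ) 1 x = insert x ((fun i => tdelAt i ℓ x) '' squareStarts ℓ x) := by
  ext y
  rw [mem_sphere_one, Set.mem_insert_iff, tdel_iff_exists_tdelAt, Set.mem_image]
  refine or_congr_right ⟨?_, ?_⟩
  · rintro ⟨i, hi, rfl⟩
    exact hi.exists_mem_squareStarts
  · rintro ⟨i, hi, rfl⟩
    exact ⟨i, hi.1, rfl⟩

theorem finite_sphere_tdel_one (ℓ : ℕ) (x : List α) : (sphere (TDel ℓ) 1 x).Finite := by
  rw [sphere_tdel_one_eq]
  exact ((finite_squareStarts ℓ x).image _).insert x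

theorem ncard_sphere_tdel_one (hℓ : 0 < ℓ) (x : List α) :
    (sphere (TDel ℓ) 1 x).ncard = (squareStarts ℓ x).ncard + 1 := by
  have x_notMem : x ∉ (fun i => tdelAt i ℓ x) '' squareStarts ℓ x := by
    rintro ⟨i, hi, heq⟩
    have hlen := hi.1.length_tdelAt_add
    rw [show tdelAt i ℓ x = x from heq] at hlen
    omega
  rw [sphere_tdel_one_eq, Set.ncard_insert_of_notMem x_notMem ((finite_squareStarts ℓ x).image _),
    injOn_tdelAt_squareStarts.ncard_image]

theorem SquareAt.squareAt_tdelAt_iff_of_add_le (hj : SquareAt j ℓ x) (hij : i + ℓ ≤ j) :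
    SquareAt i ℓ (tdelAt j ℓ x) ↔ SquareAt i ℓ x := by
  have hlen := hj.length_tdelAt_add
  have hjlen := hj.1
  refine and_congr (by omega) (forall₃_congr fun k _ hk => ?_)
  rw [hj.getElem?_tdelAt_of_lt (by omega), hj.getElem?_tdelAt_of_lt (by omega)]

theorem SquareAt.squareAt_tdelAt_iff_of_le (hj : SquareAt j ℓ x) (hji : j ≤ i) :
    SquareAt i ℓ (tdelAt j ℓ x) ↔ SquareAt (i + ℓ) ℓ x := by
  have hlen := hj.length_tdelAt_add
  refine and_congr (by omega) ⟨fun hper k hik hk => ?_, fun hper k hik hk => ?_⟩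
  · obtain ⟨k, rfl⟩ := Nat.exists_eq_add_of_le' (le_of_add_le_right hik)
    rw [← hj.getElem?_tdelAt_of_le (by omega), ← hj.getElem?_tdelAt_of_le (by omega)]
    exact hper k (by omega) (by omega)
  · rw [hj.getElem?_tdelAt_of_le (by omega), hj.getElem?_tdelAt_of_le (by omega)]
    exact hper (k + ℓ) (by omega) (by omega)

theorem add_le_of_squareAt_tdelAt (hj : j ∈ squareStarts ℓ x) (hij : i < j)
    (hi : SquareAt i ℓ (tdelAt j ℓ x)) : i + ℓ ≤ j := by
  obtain ⟨j, rfl⟩ := Nat.exists_eq_add_one_of_ne_zero (Nat.ne_zero_of_lt hij)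
  by_contra! hlt
  -- The square at `i` reaches past position `j`, so it would yield a square of `x` at `j`.
  apply getElem?_ne_of_succ_mem_squareStarts hj
  rw [← hj.1.getElem?_tdelAt_of_lt (k := j + ℓ) (by omega),
    ← hj.1.getElem?_tdelAt_of_lt (k := j) (by omega)]
  exact hi.2 j (by omega) (by omega)

theorem mem_squareStarts_of_tdelAt_of_le (hj : j ∈ squareStarts ℓ x) (hij : i ≤ j)
    (hi : i ∈ squareStarts ℓ (tdelAt j ℓ x)) : i ∈ squareStarts ℓ x := by
  rcases hij.eq_or_lt with rfl | hij
  · exact hj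
  · have hle := add_le_of_squareAt_tdelAt hj hij hi.1
    refine ⟨(hj.1.squareAt_tdelAt_iff_of_add_le hle).1 hi.1, fun k hk => ?_⟩
    rw [← hj.1.squareAt_tdelAt_iff_of_add_le (by omega)]
    exact hi.2 k hk

theorem add_mem_squareStarts_of_tdelAt_of_lt (hj : j ∈ squareStarts ℓ x) (hji : j < i)
    (hi : i ∈ squareStarts ℓ (tdelAt j ℓ x)) : i + ℓ ∈ squareStarts ℓ x := by
  refine ⟨(hj.1.squareAt_tdelAt_iff_of_le hji.le).1 hi.1, fun k hk => ?_⟩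
  obtain ⟨k, rfl⟩ : ∃ k', k = k' + ℓ := ⟨i - 1, by omega⟩
  rw [← hj.1.squareAt_tdelAt_iff_of_le (by omega)]
  exact hi.2 k (by omega)

theorem ncard_squareStarts_tdelAt_le (hj : j ∈ squareStarts ℓ x) :
    (squareStarts ℓ (tdelAt j ℓ x)).ncard ≤ (squareStarts ℓ x).ncard := by
  -- The deletion shortens the stretch starting at `j` and moves the later ones by `ℓ` to the left.
  refine Set.ncard_le_ncard_of_injOn (fun i => if i ≤ j then i else i + ℓ) (fun i hi => ?_)
    (fun a _ b _ h => by grind) (finite_squareStarts ℓ x)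
  split_ifs with hij
  · exact mem_squareStarts_of_tdelAt_of_le hj hij hi
  · exact add_mem_squareStarts_of_tdelAt_of_lt hj (not_le.1 hij) hi

theorem ncard_sphere_tdel_one_le_of_mem (hℓ : 0 < ℓ) (hy : y ∈ sphere (TDel ℓ) 1 x) :
    (sphere (TDel ℓ) 1 y).ncard ≤ (sphere (TDel ℓ) 1 x).ncard := by
  rw [ncard_sphere_tdel_one hℓ, ncard_sphere_tdel_one hℓ, add_le_add_iff_right]
  rw [sphere_tdel_one_eq] at hy
  rcases hy with rfl | ⟨j, hj, rfl⟩
  · exact le_rfl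
  · exact ncard_squareStarts_tdelAt_le hj

end DeletionSphere

section Words

variable [Fintype α] {n : ℕ}

variable (α n) in
/-- The set `α ^ n` of words of length `n`, as a finite set of lists. -/
def words : Finset (List α) := Finset.univ.map ⟨List.ofFn (n := n), List.ofFn_injective⟩

theorem mem_words {y : List α} : y ∈ words α n ↔ y.length = n := by
  simp only [words, Finset.mem_map, Finset.mem_univ, true_and, Function.Embedding.coeFn_mk]
  constructor
  · rintro ⟨x, rfl⟩
    exact List.length_ofFn
  · rintro rfl
    exact ⟨y.get, List.ofFn_get y⟩

theorem sum_words {M : Type*} [AddCommMonoid M] (f : List α → M) :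
    ∑ y ∈ words α n, f y = ∑ x : Fin n → α, f (List.ofFn x) :=
  Finset.sum_map _ _ _

end Words

theorem stmt13_general [Fintype α] {ℓ n : ℕ} (hℓ : 0 < ℓ) (hn : ℓ ≤ n) {C : Finset (List α)}
    (hC : ∀ c ∈ C, c.length = n) (hcorr : Correcting (TDup ℓ) 1 (C : Set (List α))) :
    (C.card : ℚ) ≤
      (∑ x : Fin n → α, 1 / ((sphere (TDel ℓ) 1 (List.ofFn x)).ncard : ℚ)) +
        ∑ x : Fin (n - ℓ) → α, 1 / ((sphere (TDel ℓ) 1 (List.ofFn x)).ncard : ℚ) := by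
  have words_disjoint : Disjoint (words α n) (words α (n - ℓ)) :=
    Finset.disjoint_left.2 fun y h₁ h₂ => by rw [mem_words] at h₁ h₂; omega
  have spheres_disjoint : (C : Set (List α)).PairwiseDisjoint (sphere (TDel ℓ) 1) :=
    flip_tdup (α := α) ▸ hcorr.pairwiseDisjoint_sphere_flip fun _ _ _ => TDup.diamond
  have sphere_subset_words : ∀ c ∈ C,
      sphere (TDel ℓ) 1 c ⊆ (words α n).disjUnion (words α (n - ℓ)) words_disjoint := by
    intro c hc y hy
    rw [Finset.mem_coe, Finset.mem_disjUnion, mem_words, mem_words, ← hC c hc]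
    refine (mem_sphere_one.1 hy).imp (congrArg _) fun h => ?_
    rw [← h.length_add, Nat.add_sub_cancel]
  rw [← sum_words (fun y => 1 / ((sphere (TDel ℓ) 1 y).ncard : ℚ)),
    ← sum_words (fun y => 1 / ((sphere (TDel ℓ) 1 y).ncard : ℚ)),
    ← Finset.sum_disjUnion words_disjoint]
  exact card_le_sum_one_div_ncard (finite_sphere_tdel_one ℓ)
    (fun y => mem_sphere_one.2 (Or.inl rfl))
    (fun _ _ _ hy => ncard_sphere_tdel_one_le_of_mem hℓ hy) spheres_disjoint sphere_subset_words

/-- Generalized sphere packing bound for single tandem-duplication correcting codes: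
`|C| ≤ Σ_{x ∈ Z_q^n} 1/|S_{τ^δ,ℓ}(x)| + Σ_{x' ∈ Z_q^{n−ℓ}} 1/|S_{τ^δ,ℓ}(x')|`. -/
theorem stmt13 (q ℓ n : ℕ) (hq : 2 ≤ q) (hℓ : 1 ≤ ℓ) (hn : 2 * ℓ ≤ n)
    (C : Finset (List (ZMod q))) (hC : ∀ c ∈ C, c.length = n)
    (hcorr : Correcting (TDup ℓ) 1 (↑C : Set (List (ZMod q)))) :
    haveI : NeZero q := ⟨by omega⟩
    (C.card : ℚ) ≤
      (∑ x : Fin n → ZMod q, 1 / ((sphere (TDel ℓ) 1 (List.ofFn x)).ncard : ℚ)) +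
        ∑ x : Fin (n - ℓ) → ZMod q, 1 / ((sphere (TDel ℓ) 1 (List.ofFn x)).ncard : ℚ) := by
  have : NeZero q := ⟨by omega⟩
  exact stmt13_general hℓ (by omega) hC hcorr
end DupPaper
end
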